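/- arXiv:1411.6363 — 2 statements merged into one kernel-verified Lean document; each statement's English description precedes it below -/
import Mathlib

section
/- Let n be a positive integer and let σ₀ be a decorated permutation of order n with σ₀(i) ∈ {i, i + n} for all i ∈ ℤ. Let a < b < a + n be integers with σ₀(a) = a and σ₀(b) = b + n. Define σ̃ : ℤ → ℤ by σ̃(a + mn) = b + mn and σ̃(b + mn) = a + n + mn for all m ∈ ℤ, and σ̃(q) = σ₀(q) for all q not congruent to a or b modulo n. Then: σ̃ is a decorated permutation of order n; (a b) is an allowed boundary transposition for σ̃, and σ̃ ∘ t_{a,b} is the decorated permutation τ satisfying τ(a) = a + n, τ(b) = b, and τ(q) = σ₀(q) for q not congruent to a or b modulo n; (b a+n) is an allowed boundary transposition for σ̃, and σ̃ ∘ t_{b,a+n} = σ₀; and these are the only allowed boundary transpositions (a' b') for σ̃ with 1 ≤ a' ≤ n, up to shifting both entries by the same multiple of n. -/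
/-- A decorated permutation of order `n`: a bijection `σ : ℤ → ℤ` with
`σ (i + n) = σ i + n` and `i ≤ σ i ≤ i + n` for all `i`. -/
def IsDecoratedPerm (n : ℤ) (σ : ℤ → ℤ) : Prop :=
  Function.Bijective σ ∧ (∀ i : ℤ, σ (i + n) = σ i + n) ∧ ∀ i : ℤ, i ≤ σ i ∧ σ i ≤ i + n

/-- The affine transposition `t_{a,b}`: swaps `a + m*n` and `b + m*n` for every `m : ℤ`
and fixes all integers not congruent to `a` or `b` modulo `n`. -/
def affT (n a b : ℤ) (i : ℤ) : ℤ :=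
  if (i - a) % n = 0 then i + (b - a)
  else if (i - b) % n = 0 then i - (b - a)
  else i

/-- `(a b)` is an allowed boundary transposition for `σ`: `a < b < a + n`,
`b ≤ σ a < σ b ≤ a + n`, and there is no `q` with `a < q < b` and `σ a < σ q < σ b`. -/
def AllowedBT (n : ℤ) (σ : ℤ → ℤ) (a b : ℤ) : Prop :=
  a < b ∧ b < a + n ∧ b ≤ σ a ∧ σ a < σ b ∧ σ b ≤ a + n ∧
    ¬ ∃ q : ℤ, a < q ∧ q < b ∧ σ a < σ q ∧ σ q < σ b

theorem affT_spec1 (n a b m : ℤ) : affT n a b (a + m * n) = b + m * n := by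
  unfold affT
  rw [if_pos (by simp)]; ring

theorem affT_spec2 (n a b m : ℤ) (h : (b - a) % n ≠ 0) :
    affT n a b (b + m * n) = a + m * n := by
  unfold affT
  rw [if_neg, if_pos (by simp)]
  · ring
  · rw [show b + m * n - a = b - a + m * n by ring]
    simpa using h

theorem affT_spec3 (n a b q : ℤ) (h1 : (q - a) % n ≠ 0) (h2 : (q - b) % n ≠ 0) :
    affT n a b q = q := by
  unfold affT
  rw [if_neg h1, if_neg h2]

theorem tricho (n a b q : ℤ) : (∃ m, q = a + m * n) ∨ (∃ m, q = b + m * n) ∨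
    ((q - a) % n ≠ 0 ∧ (q - b) % n ≠ 0) := by
  by_cases h1 : (q - a) % n = 0
  · obtain ⟨m, hm⟩ := Int.dvd_of_emod_eq_zero h1
    exact Or.inl ⟨m, by linarith⟩
  by_cases h2 : (q - b) % n = 0
  · obtain ⟨m, hm⟩ := Int.dvd_of_emod_eq_zero h2
    exact Or.inr (Or.inl ⟨m, by linarith⟩)
  exact Or.inr (Or.inr ⟨h1, h2⟩)

theorem affT_invol (n a b : ℤ) (h : (b - a) % n ≠ 0) :
    Function.Involutive (affT n a b) := by
  intro q
  rcases tricho n a b q with ⟨m, rfl⟩ | ⟨m, rfl⟩ | ⟨h1, h2⟩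
  · rw [affT_spec1, affT_spec2 _ _ _ _ h]
  · rw [affT_spec2 _ _ _ _ h, affT_spec1]
  · rw [affT_spec3 _ _ _ _ h1 h2, affT_spec3 _ _ _ _ h1 h2]

theorem periodZ (n : ℤ) (σ : ℤ → ℤ) (h : ∀ i, σ (i + n) = σ i + n) (i m : ℤ) :
    σ (i + m * n) = σ i + m * n := by
  induction m using Int.induction_on with
  | zero => simp
  | succ k ih =>
    rw [show i + ((k : ℤ) + 1) * n = (i + k * n) + n by ring, h, ih]; ring
  | pred k ih =>
    have := h (i + (-(k : ℤ) - 1) * n)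
    rw [show i + (-(k : ℤ) - 1) * n + n = i + -(k : ℤ) * n by ring, ih] at this
    linarith

/-- Uniqueness of a multiple of n in an open window. -/
theorem window (n c k : ℤ) (hn : 0 < n) (h1 : 0 < c + k * n) (h2 : c + k * n < n)
    (h3 : 0 < c) (h4 : c < n) : k = 0 := by
  have h5 : k < 1 := by by_contra h; nlinarith
  have h6 : -1 < k := by by_contra h; nlinarith
  omega

theorem window0 (n k : ℤ) (hn : 0 < n) (h1 : 0 < k * n) (h2 : k * n < n) : False := by
  have h5 : k < 1 := by by_contra h; nlinarith
  nlinarith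

/-- The 1-dimensional cell `σ̃` sitting above the lollipop permutation
`σ₀` (with `σ₀ a = a`, `σ₀ b = b + n`) has exactly the two boundary transpositions
`(a b)` and `(b a+n)` (up to shifts by multiples of `n`), leading respectively to the
lollipop permutation `τ` (with `τ a = a + n`, `τ b = b`) and back to `σ₀`. -/
theorem one_dimensional_cell_boundaries (n : ℤ) (hn : 0 < n) (σ₀ : ℤ → ℤ)
    (hσ₀ : IsDecoratedPerm n σ₀) (hlol : ∀ i : ℤ, σ₀ i = i ∨ σ₀ i = i + n)
    (a b : ℤ) (hab : a < b) (hba : b < a + n)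
    (ha : σ₀ a = a) (hb : σ₀ b = b + n)
    (σt : ℤ → ℤ)
    (hσt1 : ∀ m : ℤ, σt (a + m * n) = b + m * n)
    (hσt2 : ∀ m : ℤ, σt (b + m * n) = a + n + m * n)
    (hσt3 : ∀ q : ℤ, (q - a) % n ≠ 0 → (q - b) % n ≠ 0 → σt q = σ₀ q) :
    IsDecoratedPerm n σt ∧
    AllowedBT n σt a b ∧
    (IsDecoratedPerm n (σt ∘ affT n a b) ∧
      (σt ∘ affT n a b) a = a + n ∧ (σt ∘ affT n a b) b = b ∧
      ∀ q : ℤ, (q - a) % n ≠ 0 → (q - b) % n ≠ 0 → (σt ∘ affT n a b) q = σ₀ q) ∧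
    AllowedBT n σt b (a + n) ∧ σt ∘ affT n b (a + n) = σ₀ ∧
    ∀ a' b' : ℤ, 1 ≤ a' → a' ≤ n → AllowedBT n σt a' b' →
      ∃ m : ℤ, (a' = a + m * n ∧ b' = b + m * n) ∨
        (a' = b + m * n ∧ b' = a + n + m * n) := by
  have hm1 : (b - a) % n ≠ 0 := by
    rw [Int.emod_eq_of_lt (by omega) (by omega)]; omega
  have hm2 : (a + n - b) % n ≠ 0 := by
    rw [Int.emod_eq_of_lt (by omega) (by omega)]; omega
  obtain ⟨hbij, hper, hbd⟩ := hσ₀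
  have hpa : ∀ m : ℤ, σ₀ (a + m * n) = a + m * n := fun m => by
    rw [periodZ n σ₀ hper, ha]
  have hpb : ∀ m : ℤ, σ₀ (b + m * n) = b + n + m * n := fun m => by
    rw [periodZ n σ₀ hper, hb]
  have hshift : ∀ q : ℤ, (q - (a + n)) % n = (q - a) % n := fun q => by
    rw [show q - (a + n) = q - a - n by ring]; simp
  have hadd : ∀ q c : ℤ, (q + n - c) % n = (q - c) % n := fun q c => by
    rw [show q + n - c = q - c + n by ring]; simp
  have e0 : σt = σ₀ ∘ affT n b (a + n) := by
    funext q
    rcases tricho n a b q with ⟨m, rfl⟩ | ⟨m, rfl⟩ | ⟨h1, h2⟩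
    · rw [hσt1, Function.comp, show a + m * n = a + n + (m - 1) * n by ring,
        affT_spec2 _ _ _ _ hm2, hpb]; ring
    · rw [hσt2, Function.comp, affT_spec1,
        show a + n + m * n = a + (m + 1) * n by ring, hpa]
    · rw [hσt3 q h1 h2, Function.comp, affT_spec3 _ _ _ _ h2 (by rwa [hshift])]
  have hbij' : Function.Bijective σt := by
    rw [e0]; exact hbij.comp (affT_invol _ _ _ hm2).bijective
  have c1 : ∀ m : ℤ, (σt ∘ affT n a b) (a + m * n) = a + n + m * n := fun m => by
    rw [Function.comp, affT_spec1, hσt2]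
  have c2 : ∀ m : ℤ, (σt ∘ affT n a b) (b + m * n) = b + m * n := fun m => by
    rw [Function.comp, affT_spec2 _ _ _ _ hm1, hσt1]
  have c3 : ∀ q : ℤ, (q - a) % n ≠ 0 → (q - b) % n ≠ 0 →
      (σt ∘ affT n a b) q = σ₀ q := fun q h1 h2 => by
    rw [Function.comp, affT_spec3 _ _ _ _ h1 h2, hσt3 q h1 h2]
  have sa : σt a = b := by simpa using hσt1 0
  have sb : σt b = a + n := by simpa using hσt2 0
  have san : σt (a + n) = b + n := by simpa using hσt1 1
  refine ⟨⟨hbij', ?_, ?_⟩, ⟨hab, hba, by omega, by omega, by omega, ?_⟩,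
    ⟨⟨hbij'.comp (affT_invol _ _ _ hm1).bijective, ?_, ?_⟩, by simpa using c1 0,
      by simpa using c2 0, c3⟩,
    ⟨hba, by omega, by omega, by omega, by omega, ?_⟩, ?_, ?_⟩
  · intro q
    rcases tricho n a b q with ⟨m, rfl⟩ | ⟨m, rfl⟩ | ⟨h1, h2⟩
    · rw [show a + m * n + n = a + (m + 1) * n by ring, hσt1, hσt1]; ring
    · rw [show b + m * n + n = b + (m + 1) * n by ring, hσt2, hσt2]; ring
    · rw [hσt3 q h1 h2, hσt3 (q + n) (by rwa [hadd]) (by rwa [hadd]), hper]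
  · intro q
    rcases tricho n a b q with ⟨m, rfl⟩ | ⟨m, rfl⟩ | ⟨h1, h2⟩
    · rw [hσt1]; constructor <;> linarith
    · rw [hσt2]; constructor <;> linarith
    · rw [hσt3 q h1 h2]; exact hbd q
  · rintro ⟨q, h1, h2, h3, h4⟩
    rcases tricho n a b q with ⟨m, rfl⟩ | ⟨m, rfl⟩ | ⟨g1, g2⟩
    · exact window0 n m hn (by linarith) (by linarith)
    · rw [hσt2] at h4
      rw [hσt2] at h3
      have := window n (b - a) m hn (by linarith) (by linarith) (by linarith) (by linarith)
      subst this; omega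
    · rw [hσt3 q g1 g2] at h3 h4
      rcases hlol q with h | h <;> omega
  · intro q
    rcases tricho n a b q with ⟨m, rfl⟩ | ⟨m, rfl⟩ | ⟨h1, h2⟩
    · rw [show a + m * n + n = a + (m + 1) * n by ring, c1, c1]; ring
    · rw [show b + m * n + n = b + (m + 1) * n by ring, c2, c2]; ring
    · rw [c3 q h1 h2, c3 (q + n) (by rwa [hadd]) (by rwa [hadd]), hper]
  · intro q
    rcases tricho n a b q with ⟨m, rfl⟩ | ⟨m, rfl⟩ | ⟨h1, h2⟩
    · rw [c1]; constructor <;> linarith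
    · rw [c2]; constructor <;> linarith
    · rw [c3 q h1 h2]; exact hbd q
  · rintro ⟨q, h1, h2, h3, h4⟩
    rcases tricho n a b q with ⟨m, rfl⟩ | ⟨m, rfl⟩ | ⟨g1, g2⟩
    · rw [hσt1] at h3 h4
      exact window0 n m hn (by linarith) (by linarith)
    · exact window0 n m hn (by linarith) (by linarith)
    · rw [hσt3 q g1 g2] at h3 h4
      rcases hlol q with h | h <;> omega
  · rw [e0]
    funext q
    simp only [Function.comp]
    rw [affT_invol _ _ _ hm2]
  · rintro a' b' - - ⟨h1, h2, h3, h4, h5, -⟩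
    rcases tricho n a b a' with ⟨m, rfl⟩ | ⟨m, rfl⟩ | ⟨g1, g2⟩
    · rcases tricho n a b b' with ⟨k, rfl⟩ | ⟨k, rfl⟩ | ⟨g1, g2⟩
      · exact (window0 n (k - m) hn (by linarith) (by linarith)).elim
      · have := window n (b - a) (k - m) hn (by linarith) (by linarith) (by linarith)
          (by linarith)
        exact ⟨m, Or.inl ⟨rfl, by rw [show k = m by omega]⟩⟩
      · rw [hσt3 b' g1 g2] at h4 h5
        rcases hlol b' with h | h <;> omega
    · rcases tricho n a b b' with ⟨k, rfl⟩ | ⟨k, rfl⟩ | ⟨g1, g2⟩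
      · have := window n (a + n - b) (k - m - 1) hn (by linarith) (by linarith)
          (by linarith) (by linarith)
        exact ⟨m, Or.inr ⟨rfl, by rw [show k = m + 1 by omega]; ring⟩⟩
      · exact (window0 n (k - m) hn (by linarith) (by linarith)).elim
      · rw [hσt3 b' g1 g2] at h4 h5
        rcases hlol b' with h | h <;> omega
    · rw [hσt3 a' g1 g2] at h3 h4
      rcases hlol a' with h | h <;> omega
end

section
/- Let n be a positive integer, let σ be a decorated permutation of order n, and let ρ : ℤ → ℤ be any function. Consider the set S of pairs ((a, b), (c, d)) of pairs of integers with 1 ≤ a ≤ n, a < b < a + n, 1 ≤ c ≤ n, c < d < c + n, such that (a b) is an allowed boundary transposition for σ, (c d) is an allowed boundary transposition for σ ∘ t_{a,b}, and σ ∘ t_{a,b} ∘ t_{c,d} = ρ. Then the cardinality of S is either 0 or 2. (Hence every codimension-2 boundary of a positroid cell is reached by exactly two chains of boundary transpositions, which is the mod-2 statement that the boundary operator squares to zero.) -/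
theorem affT_eq (n a b i : ℤ) : affT n a b i =
    if i % n = a % n then i + (b - a) else if i % n = b % n then i - (b - a) else i := by
  unfold affT
  simp only [Int.emod_eq_emod_iff_emod_sub_eq_zero]

theorem mod_tr {n i p q : ℤ} (h : i % n = p % n) : (i + (q - p)) % n = q % n := by
  rw [Int.emod_eq_emod_iff_emod_sub_eq_zero] at *
  rw [show i + (q - p) - q = i - p by ring]; exact h

theorem mod_tr' {n i p q : ℤ} (h : i % n = q % n) : (i - (q - p)) % n = p % n := by
  rw [Int.emod_eq_emod_iff_emod_sub_eq_zero] at *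
  rw [show i - (q - p) - p = i - q by ring]; exact h

theorem ndm {n x y : ℤ} (h1 : x < y) (h2 : y < x + n) : x % n ≠ y % n := by
  intro h
  have h3 : n ∣ y - x := Int.modEq_iff_dvd.1 h
  have := Int.le_of_dvd (by omega) h3
  omega

theorem mod_ex {n x y : ℤ} (h : x % n = y % n) : ∃ k, y = x + k * n := by
  have h3 : n ∣ y - x := Int.modEq_iff_dvd.1 h
  obtain ⟨k, hk⟩ := h3
  exact ⟨k, by rw [mul_comm]; omega⟩

theorem affT_shift (n a b k : ℤ) : affT n (a + k * n) (b + k * n) = affT n a b := by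
  funext i
  simp only [affT_eq, Int.add_mul_emod_self_right]
  grind

theorem affT_per (n a b k i : ℤ) : affT n a b (i + k * n) = affT n a b i + k * n := by
  simp only [affT_eq, Int.add_mul_emod_self_right]
  grind

theorem affT_L1 {n p q i j : ℤ} (hpq : p % n ≠ q % n) (h : affT n p q i = j) (hj : j ≠ i) :
    affT n p q = affT n i j := by
  rw [affT_eq] at h
  split_ifs at h with h1 h2
  · have := mod_tr (q := q) h1
    funext m
    simp only [affT_eq]
    subst h
    grind
  · have := mod_tr' (p := p) h2
    funext m
    simp only [affT_eq]
    subst h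
    grind
  · omega

theorem affT_inv {n p q : ℤ} (i : ℤ) (hpq : p % n ≠ q % n) :
    affT n p q (affT n p q i) = i := by
  have := @mod_tr n i p q
  have := @mod_tr' n i p q
  simp only [affT_eq]
  grind

theorem affT_cancel {n p q : ℤ} (hpq : p % n ≠ q % n) {f g : ℤ → ℤ}
    (h : affT n p q ∘ f = affT n p q ∘ g) : f = g := by
  funext i
  have := congrFun h i
  simp only [Function.comp] at this
  rw [← affT_inv (f i) hpq, this, affT_inv _ hpq]

theorem affT_inj {n a b a' b' : ℤ} (h1 : a < b) (h3 : a' < b')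
    (h : affT n a b = affT n a' b') : ∃ k, a' = a + k * n ∧ b' = b + k * n := by
  have h5 := congrFun h a'
  rw [affT_eq, affT_eq, if_pos rfl] at h5
  split_ifs at h5 with h6 h7
  · obtain ⟨k, hk⟩ := mod_ex h6.symm
    exact ⟨k, hk, by omega⟩
  · omega
  · omega

theorem allowed_shift {n : ℤ} {σ : ℤ → ℤ} (hp : ∀ i k, σ (i + k * n) = σ i + k * n) {a b : ℤ} (k : ℤ)
    (h : AllowedBT n σ a b) : AllowedBT n σ (a + k * n) (b + k * n) := by
  obtain ⟨h1, h2, h3, h4, h5, h6⟩ := h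
  refine ⟨by omega, by omega, by rw [hp]; omega, by rw [hp, hp]; omega, by rw [hp]; omega, ?_⟩
  rintro ⟨q, g1, g2, g3, g4⟩
  apply h6
  have := hp (q - k * n) k
  rw [show q - k * n + k * n = q by ring] at this
  rw [hp] at g3 g4
  exact ⟨q - k * n, by omega, by omega, by omega, by omega⟩

theorem per_comp {n : ℤ} {σ : ℤ → ℤ} (hp : ∀ i k, σ (i + k * n) = σ i + k * n) (a b : ℤ) :
    ∀ i k, (σ ∘ affT n a b) (i + k * n) = (σ ∘ affT n a b) i + k * n := by
  intro i k
  simp only [Function.comp, affT_per, hp]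

/-- `s` is an allowed affine transposition for `σ`. -/
def AT (n : ℤ) (σ s : ℤ → ℤ) : Prop := ∃ a b, AllowedBT n σ a b ∧ s = affT n a b

theorem AT_iff {n : ℤ} {σ : ℤ → ℤ} (hp : ∀ i k, σ (i + k * n) = σ i + k * n) {x y : ℤ} (hxy : x < y) :
    AT n σ (affT n x y) ↔ AllowedBT n σ x y := by
  constructor
  · rintro ⟨a, b, h, e⟩
    obtain ⟨k, h1, h2⟩ := affT_inj h.1 hxy e.symm
    rw [h1, h2]; exact allowed_shift hp k h
  · intro h; exact ⟨x, y, h, rfl⟩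

theorem three_moved {n p q r s : ℤ} (hpq : p % n ≠ q % n) {π : ℤ → ℤ}
    (h : affT n p q ∘ affT n r s = π) {i j k : ℤ} (hij : i % n ≠ j % n) (hik : i % n ≠ k % n)
    (hjk : j % n ≠ k % n) (hi : π i ≠ i) (hj : π j ≠ j) (hk : π k ≠ k) :
    affT n p q = affT n i (π i) ∨ affT n p q = affT n j (π j) ∨ affT n p q = affT n k (π k) := by
  have key : ∀ m, π m ≠ m → m % n ≠ r % n → m % n ≠ s % n → affT n p q = affT n m (π m) := by
    intro m hm h1 h2
    have e : affT n r s m = m := by rw [affT_eq, if_neg h1, if_neg h2]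
    apply affT_L1 hpq _ hm
    rw [← h]; simp only [Function.comp, e]
  have := key i hi
  have := key j hj
  have := key k hk
  grind

theorem affT_symm {n a b : ℤ} (h : a % n ≠ b % n) : affT n a b = affT n b a := by
  funext i
  simp only [affT_eq]
  grind

theorem affT_a (n a b : ℤ) : affT n a b a = b := by rw [affT_eq, if_pos rfl]; ring
theorem affT_b {n a b : ℤ} (h : a % n ≠ b % n) : affT n a b b = a := by
  rw [affT_eq, if_neg h.symm, if_pos rfl]; ring
theorem affT_o {n a b i : ℤ} (h : i % n ≠ a % n) (h' : i % n ≠ b % n) : affT n a b i = i := by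
  rw [affT_eq, if_neg h, if_neg h']

/-- The set of first steps. -/
def FS (n : ℤ) (σ ρ : ℤ → ℤ) : Set (ℤ → ℤ) :=
  {s | AT n σ s ∧ ∃ t, AT n (σ ∘ s) t ∧ (σ ∘ s) ∘ t = ρ}

theorem affT_comm {n a b c d : ℤ} (hac : a % n ≠ c % n) (had : a % n ≠ d % n)
    (hbc : b % n ≠ c % n) (hbd : b % n ≠ d % n) :
    affT n a b ∘ affT n c d = affT n c d ∘ affT n a b := by
  funext i
  have := @mod_tr n i a b
  have := @mod_tr' n i a b
  have := @mod_tr n i c d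
  have := @mod_tr' n i c d
  simp only [Function.comp]
  simp only [affT_eq]
  grind

theorem FS_disj {n : ℤ} {σ : ℤ → ℤ} (hp : ∀ i k, σ (i + k * n) = σ i + k * n)
    (hi : Function.Injective σ) {a b c d : ℤ}
    (h1 : AllowedBT n σ a b) (h2 : AllowedBT n (σ ∘ affT n a b) c d)
    (hac : a % n ≠ c % n) (had : a % n ≠ d % n)
    (hbc : b % n ≠ c % n) (hbd : b % n ≠ d % n) :
    ∃ s s', s ≠ s' ∧ FS n σ ((σ ∘ affT n a b) ∘ affT n c d) = {s, s'} := by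
  have hab := ndm h1.1 h1.2.1
  have hcd := ndm h2.1 h2.2.1
  have hcomm := affT_comm hac had hbc hbd
  have sh1 : ∀ k, AllowedBT n σ (a + k * n) (b + k * n) := fun k => allowed_shift hp k h1
  have sh2 : ∀ k, AllowedBT n (σ ∘ affT n a b) (c + k * n) (d + k * n) :=
    fun k => allowed_shift (per_comp hp a b) k h2
  have ec : affT n a b c = c := affT_o hac.symm hbc.symm
  have ed : affT n a b d = d := affT_o had.symm hbd.symm
  have ea : affT n c d a = a := affT_o hac had
  have eb : affT n c d b = b := affT_o hbc hbd
  have A1 : AllowedBT n σ c d := by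
    obtain ⟨g1, g2, g3, g4, g5, g6⟩ := h2
    simp only [Function.comp, ec, ed] at g3 g4 g5 g6
    refine ⟨g1, g2, g3, g4, g5, ?_⟩
    rintro ⟨q, q1, q2, q3, q4⟩
    by_cases qa : a % n = q % n
    · obtain ⟨k, hk⟩ := mod_ex qa
      obtain ⟨f1, f2, f3, f4, f5, f6⟩ := sh1 k
      rw [← hk] at f1 f2 f3 f4 f5 f6
      have e1 : affT n a b q = b + k * n := by rw [hk, affT_per, affT_a]
      have e2 : affT n a b (b + k * n) = q := by rw [hk, affT_per, affT_b hab]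
      have hne : d ≠ b + k * n := by
        rintro rfl; simp at hbd
      have hne2 : σ d ≠ σ (b + k * n) := fun h => hne (hi h)
      have u1 : ¬ _ := fun h => g6 ⟨q, h⟩
      have u2 : ¬ _ := fun h => g6 ⟨b + k * n, h⟩
      have u3 : ¬ _ := fun h => f6 ⟨d, h⟩
      rw [e1] at u1
      rw [e2] at u2
      omega
    by_cases qb : b % n = q % n
    · obtain ⟨k, hk⟩ := mod_ex qb
      obtain ⟨f1, f2, f3, f4, f5, f6⟩ := sh1 k
      rw [← hk] at f1 f2 f3 f4 f5 f6
      have e1 : affT n a b q = a + k * n := by rw [hk, affT_per, affT_b hab]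
      have e2 : affT n a b (a + k * n) = q := by rw [hk, affT_per, affT_a]
      have hne : c ≠ a + k * n := by
        rintro rfl; simp at hac
      have hne2 : σ c ≠ σ (a + k * n) := fun h => hne (hi h)
      have u1 : ¬ _ := fun h => g6 ⟨q, h⟩
      have u2 : ¬ _ := fun h => g6 ⟨a + k * n, h⟩
      have u3 : ¬ _ := fun h => f6 ⟨c, h⟩
      rw [e1] at u1
      rw [e2] at u2
      omega
    · apply g6
      exact ⟨q, q1, q2, by rw [affT_o (Ne.symm qa) (Ne.symm qb)]; exact ⟨q3, q4⟩⟩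
  have A2 : AllowedBT n (σ ∘ affT n c d) a b := by
    obtain ⟨g1, g2, g3, g4, g5, g6⟩ := h1
    refine ⟨g1, g2, ?_⟩
    simp only [Function.comp, ea, eb]
    refine ⟨g3, g4, g5, ?_⟩
    rintro ⟨q, q1, q2, q3, q4⟩
    by_cases qa : c % n = q % n
    · obtain ⟨k, hk⟩ := mod_ex qa
      obtain ⟨f1, f2, f3, f4, f5, f6⟩ := sh2 k
      rw [← hk] at f1 f2 f3 f4 f5 f6
      have e1 : affT n c d q = d + k * n := by rw [hk, affT_per, affT_a]
      have e3 : affT n a b q = q := by rw [hk, affT_per, ec]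
      have e4 : affT n a b (d + k * n) = d + k * n := by rw [affT_per, ed]
      have hne : b ≠ d + k * n := by
        rintro rfl; simp at hbd
      have hne3 : a ≠ q := by omega
      have hne2 : σ a ≠ σ q := fun h => hne3 (hi h)
      have u1 : ¬ _ := fun h => g6 ⟨q, h⟩
      have u2 : ¬ _ := fun h => g6 ⟨d + k * n, h⟩
      have u3 : ¬ _ := fun h => f6 ⟨b, h⟩
      simp only [Function.comp, e3, e4, affT_b hab, e1] at *
      omega
    by_cases qb : d % n = q % n
    · obtain ⟨k, hk⟩ := mod_ex qb
      obtain ⟨f1, f2, f3, f4, f5, f6⟩ := sh2 k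
      rw [← hk] at f1 f2 f3 f4 f5 f6
      have e1 : affT n c d q = c + k * n := by rw [hk, affT_per, affT_b hcd]
      have e3 : affT n a b q = q := by rw [hk, affT_per, ed]
      have e4 : affT n a b (c + k * n) = c + k * n := by rw [affT_per, ec]
      have hne : a ≠ c + k * n := by
        rintro rfl; simp at hac
      have hne3 : b ≠ q := by omega
      have hne2 : σ b ≠ σ q := fun h => hne3 (hi h)
      have u1 : ¬ _ := fun h => g6 ⟨q, h⟩
      have u2 : ¬ _ := fun h => g6 ⟨c + k * n, h⟩
      have u3 : ¬ _ := fun h => f6 ⟨a, h⟩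
      simp only [Function.comp, e3, e4, affT_a, e1] at *
      omega
    · rw [affT_o (Ne.symm qa) (Ne.symm qb)] at q3 q4
      exact g6 ⟨q, q1, q2, q3, q4⟩
  refine ⟨affT n a b, affT n c d, ?_, ?_⟩
  · intro h
    have := congrFun h a
    rw [affT_a, ea] at this
    have := h1.1
    omega
  · ext s
    constructor
    · rintro ⟨⟨p, q, hs, rfl⟩, _, ⟨r, s, ht, rfl⟩, e⟩
      have e' : affT n p q ∘ affT n r s = affT n a b ∘ affT n c d := by
        funext i; exact hi (congrFun e i)
      have pa : (affT n a b ∘ affT n c d) a = b := by simp only [Function.comp, ea, affT_a]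
      have pb : (affT n a b ∘ affT n c d) b = a := by simp only [Function.comp, eb, affT_b hab]
      have pc : (affT n a b ∘ affT n c d) c = d := by simp only [Function.comp, affT_a, ed]
      have l1 := h1.1
      have l2 := h2.1
      have := three_moved (ndm hs.1 hs.2.1) e' hab hac hbc (by omega) (by omega) (by omega)
      rw [pa, pb, pc, ← affT_symm hab] at this
      simp only [Set.mem_insert_iff, Set.mem_singleton_iff]
      tauto
    · rintro (rfl | rfl)
      · exact ⟨⟨a, b, h1, rfl⟩, _, ⟨c, d, h2, rfl⟩, rfl⟩
      · exact ⟨⟨c, d, A1, rfl⟩, _, ⟨a, b, A2, rfl⟩, by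
          rw [Function.comp_assoc, Function.comp_assoc, hcomm]⟩

theorem al_iff {n : ℤ} {f : ℤ → ℤ} {a b : ℤ} : AllowedBT n f a b ↔
    a < b ∧ b < a + n ∧ b ≤ f a ∧ f a < f b ∧ f b ≤ a + n ∧
    ∀ q, a < q → q < b → f a < f q → f q < f b → False := by
  unfold AllowedBT
  simp only [not_exists, not_and, not_lt]
  constructor
  · rintro ⟨h1, h2, h3, h4, h5, h6⟩
    exact ⟨h1, h2, h3, h4, h5, fun q a1 a2 a3 a4 => absurd (h6 q a1 a2 a3) (by omega)⟩
  · rintro ⟨h1, h2, h3, h4, h5, h6⟩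
    exact ⟨h1, h2, h3, h4, h5, fun q a1 a2 a3 => by
      by_contra h; exact h6 q a1 a2 a3 (by omega)⟩

set_option maxHeartbeats 1000000 in
theorem two_V {n x y z : ℤ} {f f1 f2 f3 : ℤ → ℤ} (hi : Function.Injective f)
    (hxy : x < y) (hyz : y < z) (hzx : z < x + n)
    (a1 : f1 x = f y) (a2 : f1 y = f x) (a3 : f1 z = f z)
    (a4 : ∀ q, x < q → q < z → q ≠ y → f1 q = f q)
    (b1 : f2 x = f x) (b2 : f2 y = f z) (b3 : f2 z = f y)
    (b4 : ∀ q, x < q → q < z → q ≠ y → f2 q = f q)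
    (c1 : f3 x = f z) (c2 : f3 y = f y) (c3 : f3 z = f x)
    (c4 : ∀ q, x < q → q < z → q ≠ y → f3 q = f q)
    (h : (AllowedBT n f x y ∧ AllowedBT n f1 y z) ∨ (AllowedBT n f y z ∧ AllowedBT n f2 x z) ∨
      (AllowedBT n f x z ∧ AllowedBT n f3 x y)) :
    ((AllowedBT n f x y ∧ AllowedBT n f1 y z) ∧ (AllowedBT n f y z ∧ AllowedBT n f2 x z) ∧
      ¬ (AllowedBT n f x z ∧ AllowedBT n f3 x y)) ∨
    ((AllowedBT n f x y ∧ AllowedBT n f1 y z) ∧ (AllowedBT n f x z ∧ AllowedBT n f3 x y) ∧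
      ¬ (AllowedBT n f y z ∧ AllowedBT n f2 x z)) := by
  have n2 : f y ≠ f z := fun h => by have := hi h; omega
  have n3 : ∀ q, q ≠ y → f q ≠ f y := fun q h h' => h (hi h')
  have n4 : ∀ q, q ≠ z → f q ≠ f z := fun q h h' => h (hi h')
  simp only [al_iff, a1, a2, a3, b1, b2, b3, c1, c2, c3] at h ⊢
  rcases lt_or_gt_of_ne n2 with h' | h'
  · left
    (rcases h with ⟨⟨g1, g2, g3, g4, g5, g6⟩, e1, e2, e3, e4, e5, e6⟩ | ⟨⟨g1, g2, g3, g4, g5, g6⟩, e1, e2, e3, e4, e5, e6⟩ | ⟨⟨g1, g2, g3, g4, g5, g6⟩, e1, e2, e3, e4, e5, e6⟩) <;>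
    (refine ⟨⟨⟨?_, ?_, ?_, ?_, ?_, ?_⟩, ⟨?_, ?_, ?_, ?_, ?_, ?_⟩⟩, ⟨⟨?_, ?_, ?_, ?_, ?_, ?_⟩, ⟨?_, ?_, ?_, ?_, ?_, ?_⟩⟩, ?_⟩) <;>
    first
    | omega
    | (intro q p1 p2 p3 p4
       have k1 := a4 q
       have k2 := b4 q
       have k3 := c4 q
       have k4 := n3 q
       have k5 := n4 q
       have k6 := g6 q
       have k7 := e6 q
       clear a4 b4 c4 n3 n4 g6 e6
       grind)
    | (rintro ⟨⟨g1', g2', g3', g4', g5', g6'⟩, e1', e2', e3', e4', e5', e6'⟩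
       omega)
  · right
    (rcases h with ⟨⟨g1, g2, g3, g4, g5, g6⟩, e1, e2, e3, e4, e5, e6⟩ | ⟨⟨g1, g2, g3, g4, g5, g6⟩, e1, e2, e3, e4, e5, e6⟩ | ⟨⟨g1, g2, g3, g4, g5, g6⟩, e1, e2, e3, e4, e5, e6⟩) <;>
    (refine ⟨⟨⟨?_, ?_, ?_, ?_, ?_, ?_⟩, ⟨?_, ?_, ?_, ?_, ?_, ?_⟩⟩, ⟨⟨?_, ?_, ?_, ?_, ?_, ?_⟩, ⟨?_, ?_, ?_, ?_, ?_, ?_⟩⟩, ?_⟩) <;>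
    first
    | omega
    | (intro q p1 p2 p3 p4
       have k1 := a4 q
       have k2 := b4 q
       have k3 := c4 q
       have k4 := n3 q
       have k5 := n4 q
       have k6 := g6 q
       have k7 := e6 q
       clear a4 b4 c4 n3 n4 g6 e6
       grind)
    | (rintro ⟨⟨g1', g2', g3', g4', g5', g6'⟩, e1', e2', e3', e4', e5', e6'⟩
       omega)

set_option maxHeartbeats 1000000 in
theorem two_W {n x y z : ℤ} {f f1 f2 f3 : ℤ → ℤ} (hi : Function.Injective f)
    (hxy : x < y) (hyz : y < z) (hzx : z < x + n)
    (a1 : f1 x = f y) (a2 : f1 y = f x) (a3 : f1 z = f z)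
    (a4 : ∀ q, x < q → q < z → q ≠ y → f1 q = f q)
    (b1 : f2 x = f x) (b2 : f2 y = f z) (b3 : f2 z = f y)
    (b4 : ∀ q, x < q → q < z → q ≠ y → f2 q = f q)
    (c1 : f3 x = f z) (c2 : f3 y = f y) (c3 : f3 z = f x)
    (c4 : ∀ q, x < q → q < z → q ≠ y → f3 q = f q)
    (h : (AllowedBT n f y z ∧ AllowedBT n f2 x y) ∨ (AllowedBT n f x y ∧ AllowedBT n f1 x z) ∨
      (AllowedBT n f x z ∧ AllowedBT n f3 y z)) :
    ((AllowedBT n f y z ∧ AllowedBT n f2 x y) ∧ (AllowedBT n f x y ∧ AllowedBT n f1 x z) ∧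
      ¬ (AllowedBT n f x z ∧ AllowedBT n f3 y z)) ∨
    ((AllowedBT n f y z ∧ AllowedBT n f2 x y) ∧ (AllowedBT n f x z ∧ AllowedBT n f3 y z) ∧
      ¬ (AllowedBT n f x y ∧ AllowedBT n f1 x z)) := by
  have n2 : f x ≠ f y := fun h => by have := hi h; omega
  have n3 : ∀ q, q ≠ y → f q ≠ f y := fun q h h' => h (hi h')
  have n4 : ∀ q, q ≠ x → f q ≠ f x := fun q h h' => h (hi h')
  simp only [al_iff, a1, a2, a3, b1, b2, b3, c1, c2, c3] at h ⊢
  rcases lt_or_gt_of_ne n2 with h' | h'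
  · left
    (rcases h with ⟨⟨g1, g2, g3, g4, g5, g6⟩, e1, e2, e3, e4, e5, e6⟩ | ⟨⟨g1, g2, g3, g4, g5, g6⟩, e1, e2, e3, e4, e5, e6⟩ | ⟨⟨g1, g2, g3, g4, g5, g6⟩, e1, e2, e3, e4, e5, e6⟩) <;>
    (refine ⟨⟨⟨?_, ?_, ?_, ?_, ?_, ?_⟩, ⟨?_, ?_, ?_, ?_, ?_, ?_⟩⟩, ⟨⟨?_, ?_, ?_, ?_, ?_, ?_⟩, ⟨?_, ?_, ?_, ?_, ?_, ?_⟩⟩, ?_⟩) <;>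
    first
    | omega
    | (intro q p1 p2 p3 p4
       have k1 := a4 q
       have k2 := b4 q
       have k3 := c4 q
       have k4 := n3 q
       have k5 := n4 q
       have k6 := g6 q
       have k7 := e6 q
       clear a4 b4 c4 n3 n4 g6 e6
       grind)
    | (rintro ⟨⟨g1', g2', g3', g4', g5', g6'⟩, e1', e2', e3', e4', e5', e6'⟩
       omega)
  · right
    (rcases h with ⟨⟨g1, g2, g3, g4, g5, g6⟩, e1, e2, e3, e4, e5, e6⟩ | ⟨⟨g1, g2, g3, g4, g5, g6⟩, e1, e2, e3, e4, e5, e6⟩ | ⟨⟨g1, g2, g3, g4, g5, g6⟩, e1, e2, e3, e4, e5, e6⟩) <;>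
    (refine ⟨⟨⟨?_, ?_, ?_, ?_, ?_, ?_⟩, ⟨?_, ?_, ?_, ?_, ?_, ?_⟩⟩, ⟨⟨?_, ?_, ?_, ?_, ?_, ?_⟩, ⟨?_, ?_, ?_, ?_, ?_, ?_⟩⟩, ?_⟩) <;>
    first
    | omega
    | (intro q p1 p2 p3 p4
       have k1 := a4 q
       have k2 := b4 q
       have k3 := c4 q
       have k4 := n3 q
       have k5 := n4 q
       have k6 := g6 q
       have k7 := e6 q
       clear a4 b4 c4 n3 n4 g6 e6
       grind)
    | (rintro ⟨⟨g1', g2', g3', g4', g5', g6'⟩, e1', e2', e3', e4', e5', e6'⟩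
       omega)

theorem comp3a {n i j k : ℤ} (hij : i % n ≠ j % n) (hik : i % n ≠ k % n)
    (hjk : j % n ≠ k % n) : affT n j k ∘ affT n i k = affT n i j ∘ affT n j k := by
  funext m
  have := @mod_tr n m i k
  have := @mod_tr' n m i k
  have := @mod_tr n m j k
  have := @mod_tr' n m j k
  simp only [Function.comp]
  simp only [affT_eq]
  grind

theorem comp3b {n i j k : ℤ} (hij : i % n ≠ j % n) (hik : i % n ≠ k % n)
    (hjk : j % n ≠ k % n) : affT n i k ∘ affT n i j = affT n i j ∘ affT n j k := by
  funext m
  have := @mod_tr n m i j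
  have := @mod_tr' n m i j
  have := @mod_tr n m j k
  have := @mod_tr' n m j k
  simp only [Function.comp]
  simp only [affT_eq]
  grind

theorem FS3_mem {n : ℤ} {σ : ℤ → ℤ} (hi : Function.Injective σ) {i j k : ℤ}
    (hij : i % n ≠ j % n) (hik : i % n ≠ k % n) (hjk : j % n ≠ k % n) (s : ℤ → ℤ) :
    s ∈ FS n σ (σ ∘ (affT n i j ∘ affT n j k)) ↔
      (s = affT n i j ∧ AT n σ (affT n i j) ∧ AT n (σ ∘ affT n i j) (affT n j k)) ∨
      (s = affT n j k ∧ AT n σ (affT n j k) ∧ AT n (σ ∘ affT n j k) (affT n i k)) ∨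
      (s = affT n i k ∧ AT n σ (affT n i k) ∧ AT n (σ ∘ affT n i k) (affT n i j)) := by
  constructor
  · rintro ⟨hs, t, ht, e⟩
    have e' : s ∘ t = affT n i j ∘ affT n j k := by
      funext i; exact hi (congrFun e i)
    have hs' := hs
    have ht' := ht
    obtain ⟨p, q, hs, rfl⟩ := hs
    obtain ⟨r, u, ht, rfl⟩ := ht
    have pi : (affT n i j ∘ affT n j k) i = j := by
      simp only [Function.comp, affT_o hij hik, affT_a]
    have pj : (affT n i j ∘ affT n j k) j = k := by
      simp only [Function.comp, affT_a, affT_o hik.symm hjk.symm]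
    have pk : (affT n i j ∘ affT n j k) k = i := by
      simp only [Function.comp, affT_b hjk, affT_b hij]
    have := three_moved (ndm hs.1 hs.2.1) e' hij hik hjk (by rw [pi]; rintro rfl; simp at hij)
      (by rw [pj]; rintro rfl; simp at hjk) (by rw [pk]; rintro rfl; simp at hik)
    rw [pi, pj, pk, ← affT_symm hik] at this
    rcases this with h | h | h
    · rw [h] at e' hs' ht' ⊢
      rw [affT_cancel hij e'] at ht'
      exact Or.inl ⟨rfl, hs', ht'⟩
    · rw [h] at e' hs' ht' ⊢
      rw [← comp3a hij hik hjk] at e'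
      rw [affT_cancel hjk e'] at ht'
      exact Or.inr (Or.inl ⟨rfl, hs', ht'⟩)
    · rw [h] at e' hs' ht' ⊢
      rw [← comp3b hij hik hjk] at e'
      rw [affT_cancel hik e'] at ht'
      exact Or.inr (Or.inr ⟨rfl, hs', ht'⟩)
  · rintro (⟨rfl, h1, h2⟩ | ⟨rfl, h1, h2⟩ | ⟨rfl, h1, h2⟩)
    · exact ⟨h1, _, h2, rfl⟩
    · exact ⟨h1, _, h2, by rw [Function.comp_assoc, comp3a hij hik hjk]⟩
    · exact ⟨h1, _, h2, by rw [Function.comp_assoc, comp3b hij hik hjk]⟩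

theorem affT_ne {n i j k : ℤ} (hij : i % n ≠ j % n) (hik : i % n ≠ k % n)
    (hjk : j % n ≠ k % n) : affT n i j ≠ affT n j k ∧ affT n i j ≠ affT n i k := by
  constructor
  · intro h
    have := congrFun h i
    rw [affT_a, affT_o hij hik] at this
    subst this; simp at hij
  · intro h
    have := congrFun h i
    rw [affT_a, affT_a] at this
    subst this; simp at hjk

theorem two_of {α : Type*} {F : Set α} {s1 s2 s3 : α} {V1 V2 V3 : Prop}
    (h12 : s1 ≠ s2) (h13 : s1 ≠ s3)
    (hF : ∀ s, s ∈ F ↔ (s = s1 ∧ V1) ∨ (s = s2 ∧ V2) ∨ (s = s3 ∧ V3))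
    (h : (V1 ∧ V2 ∧ ¬ V3) ∨ (V1 ∧ V3 ∧ ¬ V2)) : ∃ s s', s ≠ s' ∧ F = {s, s'} := by
  rcases h with ⟨a, b, c⟩ | ⟨a, b, c⟩
  · refine ⟨s1, s2, h12, ?_⟩
    ext s; rw [hF]; simp [a, b, c]
  · refine ⟨s1, s3, h13, ?_⟩
    ext s; rw [hF]; simp [a, b, c]

section three
variable {n : ℤ} {σ : ℤ → ℤ}

theorem FS_V (hp : ∀ i k, σ (i + k * n) = σ i + k * n)
    (hi : Function.Injective σ) {x y z : ℤ} (hxy : x < y) (hyz : y < z) (hzx : z < x + n)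
    (h : (AllowedBT n σ x y ∧ AllowedBT n (σ ∘ affT n x y) y z) ∨
      (AllowedBT n σ y z ∧ AllowedBT n (σ ∘ affT n y z) x z) ∨
      (AllowedBT n σ x z ∧ AllowedBT n (σ ∘ affT n x z) x y)) :
    ∃ s s', s ≠ s' ∧ FS n σ (σ ∘ (affT n x y ∘ affT n y z)) = {s, s'} := by
  have mxy : x % n ≠ y % n := ndm hxy (by omega)
  have mxz : x % n ≠ z % n := ndm (by omega) hzx
  have myz : y % n ≠ z % n := ndm hyz (by omega)
  have hm := FS3_mem hi mxy mxz myz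
  simp only [AT_iff hp hxy, AT_iff hp hyz, AT_iff hp (hxy.trans hyz),
    AT_iff (per_comp hp _ _) hxy, AT_iff (per_comp hp _ _) hyz,
    AT_iff (per_comp hp _ _) (hxy.trans hyz)] at hm
  have hne := affT_ne mxy mxz myz
  refine two_of hne.1 hne.2 hm (two_V hi hxy hyz hzx ?_ ?_ ?_ ?_ ?_ ?_ ?_ ?_ ?_ ?_ ?_ ?_ h)
  all_goals simp only [Function.comp, affT_a, affT_b mxy, affT_b mxz, affT_b myz,
    affT_o mxy mxz, affT_o mxy.symm myz, affT_o mxz.symm myz.symm]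
  all_goals
    intro q q1 q2 q3
    have l1 := ndm (n := n) q1 (by omega)
    have l2 := ndm (n := n) q2 (by omega)
    have l3 : q % n ≠ y % n := by
      rcases lt_or_gt_of_ne q3 with h | h
      · exact ndm h (by omega)
      · exact (ndm h (by omega)).symm
  · rw [affT_o l1.symm l3]
  · rw [affT_o l3 l2]
  · rw [affT_o l1.symm l2]

theorem FS_W (hp : ∀ i k, σ (i + k * n) = σ i + k * n)
    (hi : Function.Injective σ) {x y z : ℤ} (hxy : x < y) (hyz : y < z) (hzx : z < x + n)
    (h : (AllowedBT n σ y z ∧ AllowedBT n (σ ∘ affT n y z) x y) ∨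
      (AllowedBT n σ x y ∧ AllowedBT n (σ ∘ affT n x y) x z) ∨
      (AllowedBT n σ x z ∧ AllowedBT n (σ ∘ affT n x z) y z)) :
    ∃ s s', s ≠ s' ∧ FS n σ (σ ∘ (affT n y z ∘ affT n x y)) = {s, s'} := by
  have mxy : x % n ≠ y % n := ndm hxy (by omega)
  have mxz : x % n ≠ z % n := ndm (by omega) hzx
  have myz : y % n ≠ z % n := ndm hyz (by omega)
  have hm := FS3_mem hi myz.symm mxz.symm mxy.symm
  have hne := affT_ne myz.symm mxz.symm mxy.symm
  rw [← affT_symm mxy, ← affT_symm mxz, ← affT_symm myz] at hm hne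
  simp only [AT_iff hp hxy, AT_iff hp hyz, AT_iff hp (hxy.trans hyz),
    AT_iff (per_comp hp _ _) hxy, AT_iff (per_comp hp _ _) hyz,
    AT_iff (per_comp hp _ _) (hxy.trans hyz)] at hm
  refine two_of hne.1 hne.2 hm (two_W hi hxy hyz hzx ?_ ?_ ?_ ?_ ?_ ?_ ?_ ?_ ?_ ?_ ?_ ?_ h)
  all_goals simp only [Function.comp, affT_a, affT_b mxy, affT_b mxz, affT_b myz,
    affT_o mxy mxz, affT_o mxy.symm myz, affT_o mxz.symm myz.symm]
  all_goals
    intro q q1 q2 q3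
    have l1 := ndm (n := n) q1 (by omega)
    have l2 := ndm (n := n) q2 (by omega)
    have l3 : q % n ≠ y % n := by
      rcases lt_or_gt_of_ne q3 with h | h
      · exact ndm h (by omega)
      · exact (ndm h (by omega)).symm
  · rw [affT_o l1.symm l3]
  · rw [affT_o l3 l2]
  · rw [affT_o l1.symm l2]

theorem FS_main (hp : ∀ i k, σ (i + k * n) = σ i + k * n)
    (hi : Function.Injective σ) {a b c d : ℤ}
    (h1 : AllowedBT n σ a b) (h2 : AllowedBT n (σ ∘ affT n a b) c d) :
    ∃ s s', s ≠ s' ∧ FS n σ ((σ ∘ affT n a b) ∘ affT n c d) = {s, s'} := by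
  have hab := ndm h1.1 h1.2.1
  obtain ⟨g1, g2, g3, g4, g5, g6⟩ := id h1
  rw [Function.comp_assoc]
  -- shift helper
  have shift : ∀ k, AllowedBT n (σ ∘ affT n a b) (c + k * n) (d + k * n) ∧
      affT n (c + k * n) (d + k * n) = affT n c d :=
    fun k => ⟨allowed_shift (per_comp hp a b) k h2, affT_shift n c d k⟩
  by_cases hac : c % n = a % n
  · obtain ⟨k, rfl⟩ := mod_ex hac
    obtain ⟨h2, e⟩ := shift k
    rw [← e]
    generalize d + k * n = d at *
    generalize c + k * n = a at *
    obtain ⟨f1, f2, f3, f4, f5, f6⟩ := id h2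
    rcases lt_trichotomy b d with hbd | rfl | hbd
    · have mxy : a % n ≠ b % n := hab
      have mxz : a % n ≠ d % n := ndm f1 f2
      have myz : b % n ≠ d % n := ndm hbd (by omega)
      have := comp3a myz.symm mxz.symm mxy.symm
      rw [← affT_symm mxy, ← affT_symm mxz, ← affT_symm myz] at this
      rw [this]
      exact FS_W hp hi g1 hbd f2 (Or.inr (Or.inl ⟨h1, h2⟩))
    · simp only [Function.comp, affT_a, affT_b hab] at f4
      omega
    · have mxz : a % n ≠ b % n := hab
      have mxy : a % n ≠ d % n := ndm f1 f2
      have myz : d % n ≠ b % n := ndm hbd (by omega)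
      rw [comp3b mxy mxz myz]
      exact FS_V hp hi f1 hbd g2 (Or.inr (Or.inr ⟨h1, h2⟩))
  by_cases hbd : d % n = b % n
  · obtain ⟨k, rfl⟩ := mod_ex hbd
    obtain ⟨h2, e⟩ := shift k
    rw [← e]
    have hac' : (c + k * n) % n ≠ a % n := by simpa using hac
    generalize d + k * n = b at *
    generalize c + k * n = c at *
    obtain ⟨f1, f2, f3, f4, f5, f6⟩ := id h2
    rcases lt_trichotomy a c with hlt | rfl | hlt
    · have mxy : a % n ≠ c % n := hac'.symm
      have mxz : a % n ≠ b % n := hab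
      have myz : c % n ≠ b % n := ndm f1 (by omega)
      have := comp3b myz.symm mxz.symm mxy.symm
      rw [← affT_symm mxy, ← affT_symm mxz, ← affT_symm myz] at this
      rw [this]
      exact FS_W hp hi hlt f1 g2 (Or.inr (Or.inr ⟨h1, h2⟩))
    · exact absurd rfl hac'
    · have mxy : c % n ≠ a % n := hac'
      have mxz : c % n ≠ b % n := ndm f1 f2
      have myz : a % n ≠ b % n := hab
      rw [comp3a mxy mxz myz]
      exact FS_V hp hi hlt g1 f2 (Or.inr (Or.inl ⟨h1, h2⟩))
  by_cases hbc : c % n = b % n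
  · obtain ⟨k, rfl⟩ := mod_ex hbc
    obtain ⟨h2, e⟩ := shift k
    rw [← e]
    generalize d + k * n = d at *
    generalize c + k * n = b at *
    obtain ⟨f1, f2, f3, f4, f5, f6⟩ := id h2
    simp only [Function.comp, affT_b hab] at f3
    exact FS_V hp hi g1 f1 (by omega) (Or.inl ⟨h1, h2⟩)
  by_cases had : d % n = a % n
  · obtain ⟨k, rfl⟩ := mod_ex had
    obtain ⟨h2, e⟩ := shift k
    rw [← e]
    generalize d + k * n = a at *
    generalize c + k * n = c at *
    obtain ⟨f1, f2, f3, f4, f5, f6⟩ := id h2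
    simp only [Function.comp, affT_a] at f5
    exact FS_W hp hi f1 g1 (by omega) (Or.inl ⟨h1, h2⟩)
  · rw [← Function.comp_assoc]
    exact FS_disj hp hi h1 h2 (Ne.symm hac) (Ne.symm had) (Ne.symm hbc) (Ne.symm hbd)

end three

theorem per_all {n : ℤ} {σ : ℤ → ℤ} (h : ∀ i, σ (i + n) = σ i + n) :
    ∀ i k, σ (i + k * n) = σ i + k * n := by
  intro i k
  induction k using Int.induction_on with
  | zero => simp
  | succ k ih =>
    rw [show i + ((k : ℤ) + 1) * n = i + k * n + n by ring, h, ih]; ring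
  | pred k ih =>
    have := h (i + (-(k : ℤ) - 1) * n)
    rw [show i + (-(k : ℤ) - 1) * n + n = i + -(k : ℤ) * n by ring, ih] at this
    linarith

theorem norm_uniq {n a k : ℤ} (h1 : 1 ≤ a) (h2 : a ≤ n) (h3 : 1 ≤ a + k * n) (h4 : a + k * n ≤ n) :
    k = 0 := by
  have u : k < 1 := by nlinarith
  have v : -1 < k := by nlinarith
  omega

theorem AT_norm {n : ℤ} (hn : 0 < n) {σ s : ℤ → ℤ} (hp : ∀ i k, σ (i + k * n) = σ i + k * n)
    (h : AT n σ s) : ∃ a b, 1 ≤ a ∧ a ≤ n ∧ AllowedBT n σ a b ∧ s = affT n a b := by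
  obtain ⟨a, b, h, rfl⟩ := h
  refine ⟨a + (-((a - 1) / n)) * n, b + (-((a - 1) / n)) * n, ?_, ?_, allowed_shift hp _ h,
    (affT_shift _ _ _ _).symm⟩
  · have := Int.emod_nonneg (a - 1) hn.ne'
    have := Int.emod_add_mul_ediv (a - 1) n
    linarith
  · have := Int.emod_lt_of_pos (a - 1) hn
    have := Int.emod_add_mul_ediv (a - 1) n
    linarith

/-- Every codimension-2 boundary of a positroid cell is reached by
either zero or exactly two chains of two allowed boundary transpositions
(normalized so that `1 ≤ a ≤ n` and `1 ≤ c ≤ n`). -/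
theorem codim_two_boundaries_in_pairs (n : ℤ) (hn : 0 < n) (σ : ℤ → ℤ)
    (hσ : IsDecoratedPerm n σ) (ρ : ℤ → ℤ) :
    ({p : (ℤ × ℤ) × (ℤ × ℤ) |
        1 ≤ p.1.1 ∧ p.1.1 ≤ n ∧ p.1.1 < p.1.2 ∧ p.1.2 < p.1.1 + n ∧
        1 ≤ p.2.1 ∧ p.2.1 ≤ n ∧ p.2.1 < p.2.2 ∧ p.2.2 < p.2.1 + n ∧
        AllowedBT n σ p.1.1 p.1.2 ∧
        AllowedBT n (σ ∘ affT n p.1.1 p.1.2) p.2.1 p.2.2 ∧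
        (σ ∘ affT n p.1.1 p.1.2) ∘ affT n p.2.1 p.2.2 = ρ}).ncard = 0 ∨
    ({p : (ℤ × ℤ) × (ℤ × ℤ) |
        1 ≤ p.1.1 ∧ p.1.1 ≤ n ∧ p.1.1 < p.1.2 ∧ p.1.2 < p.1.1 + n ∧
        1 ≤ p.2.1 ∧ p.2.1 ≤ n ∧ p.2.1 < p.2.2 ∧ p.2.2 < p.2.1 + n ∧
        AllowedBT n σ p.1.1 p.1.2 ∧
        AllowedBT n (σ ∘ affT n p.1.1 p.1.2) p.2.1 p.2.2 ∧
        (σ ∘ affT n p.1.1 p.1.2) ∘ affT n p.2.1 p.2.2 = ρ}).ncard = 2 := by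

  obtain ⟨⟨hi, -⟩, h0, -⟩ := hσ
  have hp := per_all h0
  set S := {p : (ℤ × ℤ) × (ℤ × ℤ) |
        1 ≤ p.1.1 ∧ p.1.1 ≤ n ∧ p.1.1 < p.1.2 ∧ p.1.2 < p.1.1 + n ∧
        1 ≤ p.2.1 ∧ p.2.1 ≤ n ∧ p.2.1 < p.2.2 ∧ p.2.2 < p.2.1 + n ∧
        AllowedBT n σ p.1.1 p.1.2 ∧
        AllowedBT n (σ ∘ affT n p.1.1 p.1.2) p.2.1 p.2.2 ∧
        (σ ∘ affT n p.1.1 p.1.2) ∘ affT n p.2.1 p.2.2 = ρ} with hS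
  rcases S.eq_empty_or_nonempty with h | ⟨⟨⟨a, b⟩, c, d⟩, h⟩
  · left; rw [h, Set.ncard_empty]
  right
  obtain ⟨-, -, -, -, -, -, -, -, k1, k2, k3⟩ := h
  obtain ⟨s, s', hne, hF⟩ := FS_main hp hi k1 k2
  simp only at k3
  rw [k3] at hF
  have himg : (fun p : (ℤ × ℤ) × (ℤ × ℤ) => affT n p.1.1 p.1.2) '' S = FS n σ ρ := by
    ext t
    constructor
    · rintro ⟨⟨⟨a, b⟩, c, d⟩, ⟨-, -, -, -, -, -, -, -, k1, k2, k3⟩, rfl⟩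
      exact ⟨⟨a, b, k1, rfl⟩, _, ⟨c, d, k2, rfl⟩, k3⟩
    · rintro ⟨ha, u, hu, e⟩
      obtain ⟨a, b, a1, a2, a3, rfl⟩ := AT_norm hn hp ha
      obtain ⟨c, d, c1, c2, c3, rfl⟩ := AT_norm hn (per_comp hp _ _) hu
      exact ⟨((a, b), (c, d)), ⟨a1, a2, a3.1, a3.2.1, c1, c2, c3.1, c3.2.1, a3, c3, e⟩, rfl⟩
  have hinj : Set.InjOn (fun p : (ℤ × ℤ) × (ℤ × ℤ) => affT n p.1.1 p.1.2) S := by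
    rintro ⟨⟨a, b⟩, c, d⟩ ⟨p1, p2, p3, p4, p5, p6, p7, p8, p9, p10, p11⟩
      ⟨⟨a', b'⟩, c', d'⟩ ⟨q1, q2, q3, q4, q5, q6, q7, q8, q9, q10, q11⟩ e
    simp only at *
    have e2 : affT n c d = affT n c' d' := by
      rw [← q11, ← e] at p11
      apply affT_cancel (ndm p3 p4)
      funext i
      exact hi (congrFun p11 i)
    obtain ⟨k, rfl, rfl⟩ := affT_inj p3 q3 e
    obtain ⟨l, rfl, rfl⟩ := affT_inj p7 q7 e2
    rw [norm_uniq p1 p2 q1 q2, norm_uniq p5 p6 q5 q6]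
    simp
  rw [← hinj.ncard_image, himg, hF, Set.ncard_pair hne]
end
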